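/- In the metric space of pure states with trace distance, the ε-expansion of a closed ball of radius r centered at a pure state c equals the closed ball of radius r' = r√(1−ε²) + ε√(1−r²) centered at c, for r, ε ∈ [0,1] with corresponding Bures angles summing to at most π/2. -/

import Mathlib

open scoped InnerProductSpace

/-- Trace distance between (unit-vector representatives of) pure states. -/
noncomputable def traceDist {n : ℕ} (u v : EuclideanSpace ℂ (Fin n)) : ℝ :=
  Real.sqrt (1 - ‖⟪u, v⟫_ℂ‖ ^ 2)

/-- The set of pure states (unit vectors). -/
def pureStates (n : ℕ) : Set (EuclideanSpace ℂ (Fin n)) := {x | ‖x‖ = 1}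

/-- Closed ball of pure states of radius `r` around `c` in trace distance. -/
def pureSphere {n : ℕ} (c : EuclideanSpace ℂ (Fin n)) (r : ℝ) :
    Set (EuclideanSpace ℂ (Fin n)) :=
  {x ∈ pureStates n | traceDist x c ≤ r}

/-- The `ε`-expansion of a set of pure states in trace distance. -/
def pureExpansion {n : ℕ} (S : Set (EuclideanSpace ℂ (Fin n))) (ε : ℝ) :
    Set (EuclideanSpace ℂ (Fin n)) :=
  {x ∈ pureStates n | ∃ y ∈ S, traceDist x y ≤ ε}

/-!
The trace distance of two unit vectors is the sine of their Bures angle `arccos ‖⟪x, y⟫‖`, and `r'`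
is the sine of `arcsin r + arcsin ε`, so the claim is that radii add up when balls for the Bures
angle are expanded. Multiplying one vector of a pair by a phase makes their inner product real and
nonnegative; the Bures angle is then the angle in the underlying real inner product space. Hence it
inherits the triangle inequality and the geodesics of the real unit sphere, which give the two
inclusions.
-/

open InnerProductGeometry Real

section RealAngle

variable {V : Type*} [NormedAddCommGroup V] [InnerProductSpace ℝ V]

theorem exists_unit_angle_eq_and_angle_eq_sub {x y : V} (hx : ‖x‖ = 1) (hy : ‖y‖ = 1)
    (hxy : angle x y ≠ π) {θ : ℝ} (hθ₀ : 0 ≤ θ) (hθ : θ ≤ angle x y) :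
    ∃ z : V, ‖z‖ = 1 ∧ angle x z = θ ∧ angle z y = angle x y - θ := by
  have inner_xy : ⟪x, y⟫_ℝ = cos (angle x y) := inner_eq_cos_angle_of_norm_eq_one hx hy
  have hπ : angle x y ≤ π := angle_le_pi x y
  rcases (angle_nonneg x y).eq_or_lt with h₀ | h₀
  · have hθ_zero : θ = 0 := le_antisymm (hθ.trans h₀.ge) hθ₀
    have hx_ne : x ≠ 0 := norm_ne_zero_iff.mp (hx.trans_ne one_ne_zero)
    exact ⟨x, hx, by rw [angle_self hx_ne, hθ_zero], by rw [hθ_zero, sub_zero]⟩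
  generalize angle x y = φ at *
  have hsin : sin φ ≠ 0 := (sin_pos_of_pos_of_lt_pi h₀ (hπ.lt_of_ne hxy)).ne'
  -- Spherical linear interpolation.
  let z : V := (sin φ)⁻¹ • (sin (φ - θ) • x + sin θ • y)
  have inner_z (v : V) : ⟪v, z⟫_ℝ = (sin φ)⁻¹ * (sin (φ - θ) * ⟪v, x⟫_ℝ + sin θ * ⟪v, y⟫_ℝ) := by
    simp only [z, inner_add_right, real_inner_smul_right]
  have inner_xz : ⟪x, z⟫_ℝ = cos θ := by
    rw [inner_z, inner_xy, inner_self_eq_one_of_norm_eq_one hx, inv_mul_eq_iff_eq_mul₀ hsin,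
      sin_sub]
    ring
  have inner_yz : ⟪y, z⟫_ℝ = cos (φ - θ) := by
    rw [inner_z, real_inner_comm, inner_xy, inner_self_eq_one_of_norm_eq_one hy,
      inv_mul_eq_iff_eq_mul₀ hsin, sin_sub, cos_sub]
    linear_combination -sin θ * sin_sq_add_cos_sq φ
  have hz : ‖z‖ = 1 := by
    have inner_zz : ⟪z, z⟫_ℝ = 1 := by
      rw [inner_z, real_inner_comm, inner_xz, real_inner_comm, inner_yz,
        inv_mul_eq_iff_eq_mul₀ hsin, mul_one, mul_comm (sin θ), ← sin_add, sub_add_cancel]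
    rwa [real_inner_self_eq_norm_sq, pow_eq_one_iff_of_nonneg (norm_nonneg z) two_ne_zero]
      at inner_zz
  refine ⟨z, hz, ?_, ?_⟩
  · rw [angle, inner_xz, hx, hz, mul_one, div_one, arccos_cos hθ₀ (hθ.trans hπ)]
  · rw [angle_comm, angle, inner_yz, hy, hz, mul_one, div_one,
      arccos_cos (sub_nonneg.mpr hθ) (by linarith)]

end RealAngle

section BuresAngle

variable (𝕜 : Type*) {E : Type*} [RCLike 𝕜] [NormedAddCommGroup E] [InnerProductSpace 𝕜 E]

/-- The Bures angle between the pure states represented by `x` and `y`. Dividing by the norms makes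
it a function of the rays spanned by `x` and `y`; it is `π / 2` if one of them is zero. -/
noncomputable def buresAngle (x y : E) : ℝ :=
  arccos (‖⟪x, y⟫_𝕜‖ / (‖x‖ * ‖y‖))

theorem buresAngle_comm (x y : E) : buresAngle 𝕜 x y = buresAngle 𝕜 y x := by
  rw [buresAngle, buresAngle, norm_inner_symm, mul_comm]

theorem buresAngle_nonneg (x y : E) : 0 ≤ buresAngle 𝕜 x y :=
  arccos_nonneg _

theorem buresAngle_le_pi_div_two (x y : E) : buresAngle 𝕜 x y ≤ π / 2 :=
  arccos_le_pi_div_two.mpr (by positivity)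

theorem sin_buresAngle {x y : E} (hx : ‖x‖ = 1) (hy : ‖y‖ = 1) :
    sin (buresAngle 𝕜 x y) = √(1 - ‖⟪x, y⟫_𝕜‖ ^ 2) := by
  rw [buresAngle, sin_arccos, hx, hy, mul_one, div_one]

variable {𝕜} in
theorem buresAngle_smul_left {a : 𝕜} (ha : a ≠ 0) (x y : E) :
    buresAngle 𝕜 (a • x) y = buresAngle 𝕜 x y := by
  rw [buresAngle, buresAngle, inner_smul_left, norm_mul, RCLike.norm_conj, norm_smul, mul_assoc,
    mul_div_mul_left _ _ (norm_ne_zero_iff.mpr ha)]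

theorem buresAngle_le_angle (x y : E) :
    letI := InnerProductSpace.rclikeToReal 𝕜 E
    buresAngle 𝕜 x y ≤ angle x y :=
  arccos_le_arccos <| div_le_div_of_nonneg_right (RCLike.re_le_norm _) (by positivity)

theorem exists_phase_angle_smul_eq_buresAngle (x y : E) :
    letI := InnerProductSpace.rclikeToReal 𝕜 E
    ∃ u : 𝕜, ‖u‖ = 1 ∧ angle (u • x) y = buresAngle 𝕜 x y := by
  let := InnerProductSpace.rclikeToReal 𝕜 E
  obtain ⟨u, hu, hux⟩ := RCLike.exists_norm_eq_mul_self ⟪x, y⟫_𝕜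
  refine ⟨starRingEnd 𝕜 u, by rw [RCLike.norm_conj, hu], ?_⟩
  rw [angle, real_inner_eq_re_inner 𝕜, inner_smul_left, RCLike.conj_conj, ← hux, RCLike.ofReal_re,
    norm_smul, RCLike.norm_conj, hu, one_mul, buresAngle]

theorem buresAngle_le_add (x y z : E) :
    buresAngle 𝕜 x z ≤ buresAngle 𝕜 x y + buresAngle 𝕜 y z := by
  let := InnerProductSpace.rclikeToReal 𝕜 E
  obtain ⟨u, hu, hux⟩ := exists_phase_angle_smul_eq_buresAngle 𝕜 x y
  obtain ⟨v, hv, hvz⟩ := exists_phase_angle_smul_eq_buresAngle 𝕜 z y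
  have hu_ne : u ≠ 0 := norm_ne_zero_iff.mp (hu.trans_ne one_ne_zero)
  have hv_ne : v ≠ 0 := norm_ne_zero_iff.mp (hv.trans_ne one_ne_zero)
  calc buresAngle 𝕜 x z
      = buresAngle 𝕜 (u • x) (v • z) := by
        rw [buresAngle_smul_left hu_ne, buresAngle_comm, ← buresAngle_smul_left hv_ne,
          buresAngle_comm]
    _ ≤ angle (u • x) (v • z) := buresAngle_le_angle 𝕜 _ _
    _ ≤ angle (u • x) y + angle y (v • z) := angle_le_angle_add_angle _ _ _
    _ = buresAngle 𝕜 x y + buresAngle 𝕜 y z := by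
        rw [hux, angle_comm, hvz, buresAngle_comm 𝕜 z]

theorem exists_unit_buresAngle_eq_and_buresAngle_eq_sub {x y : E} (hx : ‖x‖ = 1) (hy : ‖y‖ = 1)
    {θ : ℝ} (hθ₀ : 0 ≤ θ) (hθ : θ ≤ buresAngle 𝕜 x y) :
    ∃ z : E, ‖z‖ = 1 ∧ buresAngle 𝕜 x z = θ ∧ buresAngle 𝕜 z y = buresAngle 𝕜 x y - θ := by
  let := InnerProductSpace.rclikeToReal 𝕜 E
  obtain ⟨u, hu, hux⟩ := exists_phase_angle_smul_eq_buresAngle 𝕜 x y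
  have hu_ne : u ≠ 0 := norm_ne_zero_iff.mp (hu.trans_ne one_ne_zero)
  have hux_norm : ‖u • x‖ = 1 := by rw [norm_smul, hu, hx, one_mul]
  have hux_ne_pi : angle (u • x) y ≠ π := by
    linarith [buresAngle_le_pi_div_two 𝕜 x y, pi_pos]
  obtain ⟨z, hz, hxz, hzy⟩ :=
    exists_unit_angle_eq_and_angle_eq_sub hux_norm hy hux_ne_pi hθ₀ (hθ.trans hux.ge)
  have hxz_le : buresAngle 𝕜 x z ≤ θ := by
    rw [← buresAngle_smul_left hu_ne, ← hxz]
    exact buresAngle_le_angle 𝕜 _ _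
  have hzy_le : buresAngle 𝕜 z y ≤ buresAngle 𝕜 x y - θ := by
    rw [← hux, ← hzy]
    exact buresAngle_le_angle 𝕜 _ _
  have htriangle := buresAngle_le_add 𝕜 x z y
  exact ⟨z, hz, by linarith, by linarith⟩

theorem exists_unit_buresAngle_le_iff {x c : E} (hx : ‖x‖ = 1) (hc : ‖c‖ = 1) {α β : ℝ}
    (hα : 0 ≤ α) (hβ : 0 ≤ β) :
    (∃ y : E, (‖y‖ = 1 ∧ buresAngle 𝕜 y c ≤ α) ∧ buresAngle 𝕜 x y ≤ β) ↔
      buresAngle 𝕜 x c ≤ α + β := by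
  constructor
  · rintro ⟨y, ⟨-, hyc⟩, hxy⟩
    linarith [buresAngle_le_add 𝕜 x y c]
  · intro h
    obtain ⟨y, hy, hxy, hyc⟩ := exists_unit_buresAngle_eq_and_buresAngle_eq_sub 𝕜 hx hc
      (le_min hβ (buresAngle_nonneg 𝕜 x c)) (min_le_right _ _)
    refine ⟨y, ⟨hy, ?_⟩, hxy.trans_le (min_le_left _ _)⟩
    rw [hyc, sub_le_iff_le_add, ← sub_le_iff_le_add', le_min_iff]
    constructor <;> linarith

theorem sqrt_one_sub_norm_inner_sq_le_iff {x y : E} (hx : ‖x‖ = 1) (hy : ‖y‖ = 1) {ρ : ℝ} :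
    √(1 - ‖⟪x, y⟫_𝕜‖ ^ 2) ≤ ρ ↔ buresAngle 𝕜 x y ≤ arcsin ρ := by
  have hpos : -(π / 2) < buresAngle 𝕜 x y := by linarith [buresAngle_nonneg 𝕜 x y, pi_pos]
  rw [← sin_buresAngle 𝕜 hx hy, le_arcsin_iff_sin_le' ⟨hpos, buresAngle_le_pi_div_two 𝕜 x y⟩]

end BuresAngle

theorem arcsin_add_arcsin {r ε : ℝ} (hr : r ∈ Set.Icc (-1) 1) (hε : ε ∈ Set.Icc (-1) 1)
    (hangle : arcsin r + arcsin ε ∈ Set.Icc (-(π / 2)) (π / 2)) :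
    arcsin r + arcsin ε = arcsin (r * √(1 - ε ^ 2) + ε * √(1 - r ^ 2)) := by
  rw [← arcsin_sin hangle.1 hangle.2, sin_add, sin_arcsin hr.1 hr.2, sin_arcsin hε.1 hε.2,
    cos_arcsin, cos_arcsin, mul_comm ε]

theorem pure_sphere_expansion_general {𝕜 E : Type*} [RCLike 𝕜] [NormedAddCommGroup E]
    [InnerProductSpace 𝕜 E] {x c : E} (hx : ‖x‖ = 1) (hc : ‖c‖ = 1)
    {r ε : ℝ} (hr : r ∈ Set.Icc 0 1) (hε : ε ∈ Set.Icc 0 1)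
    (hangle : arcsin r + arcsin ε ≤ π / 2) :
    (∃ y : E, (‖y‖ = 1 ∧ √(1 - ‖⟪y, c⟫_𝕜‖ ^ 2) ≤ r) ∧ √(1 - ‖⟪x, y⟫_𝕜‖ ^ 2) ≤ ε) ↔
      √(1 - ‖⟪x, c⟫_𝕜‖ ^ 2) ≤ r * √(1 - ε ^ 2) + ε * √(1 - r ^ 2) := by
  have hα : 0 ≤ arcsin r := arcsin_nonneg.mpr hr.1
  have hβ : 0 ≤ arcsin ε := arcsin_nonneg.mpr hε.1
  have hsum : arcsin r + arcsin ε = arcsin (r * √(1 - ε ^ 2) + ε * √(1 - r ^ 2)) :=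
    arcsin_add_arcsin ⟨by linarith [hr.1], hr.2⟩ ⟨by linarith [hε.1], hε.2⟩
      ⟨by linarith [pi_pos], hangle⟩
  rw [sqrt_one_sub_norm_inner_sq_le_iff 𝕜 hx hc, ← hsum,
    ← exists_unit_buresAngle_le_iff 𝕜 hx hc hα hβ]
  refine exists_congr fun y ↦ ?_
  rw [and_assoc, and_assoc]
  refine and_congr_right fun hy ↦ ?_
  rw [sqrt_one_sub_norm_inner_sq_le_iff 𝕜 hy hc, sqrt_one_sub_norm_inner_sq_le_iff 𝕜 hx hy]

/-- In the metric space of pure states with trace distance, the `ε`-expansion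
of the closed ball of radius `r` around a pure state `c` is the closed ball of
radius `r' = r√(1-ε²) + ε√(1-r²)` around `c`, provided the corresponding
Bures angles sum to at most `π/2`. -/
theorem pure_sphere_expansion
    {n : ℕ} (c : EuclideanSpace ℂ (Fin n)) (hc : c ∈ pureStates n)
    (r ε : ℝ) (hr0 : 0 ≤ r) (hr1 : r ≤ 1) (hε0 : 0 ≤ ε) (hε1 : ε ≤ 1)
    (hangle : Real.arcsin r + Real.arcsin ε ≤ Real.pi / 2) :
    pureExpansion (pureSphere c r) ε =
      pureSphere c (r * Real.sqrt (1 - ε ^ 2) + ε * Real.sqrt (1 - r ^ 2)) := by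
  exact Set.ext fun _ ↦ and_congr_right fun hx ↦
    pure_sphere_expansion_general hx hc ⟨hr0, hr1⟩ ⟨hε0, hε1⟩ hangle
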